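/- (Formal invertibility of asymptotic charts.) There exist an open neighborhood V of the closure of B and a family of smooth maps F_ℏ : V → ℝⁿ (ℏ ∈ 𝓘) admitting an asymptotic expansion F_ℏ ∼ F₀ + ℏF₁ + ℏ²F₂ + ⋯ in the C∞(V) topology, with F₀ = G₀⁻¹ on V, such that: for every compact K ⊂ G₀⁻¹(V) there is ℏ₀ > 0 with G_ℏ(K) ⊂ V for all ℏ ∈ 𝓘 ∩ (0,ℏ₀] and sup_K ‖F_ℏ∘G_ℏ − Id‖ = O(ℏ^∞); and for every compact K′ ⊂ V ∩ G₀(U) there is ℏ₀′ > 0 with F_ℏ(K′) ⊂ U for all ℏ ∈ 𝓘 ∩ (0,ℏ₀′] and sup_{K′} ‖G_ℏ∘F_ℏ − Id‖ = O(ℏ^∞). -/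

import Mathlib

open Set Metric

noncomputable section

/-- Euclidean space `ℝⁿ`. -/
abbrev Eucl (n : ℕ) : Type := EuclideanSpace ℝ (Fin n)

/-- The family `Gh ℏ` admits the asymptotic expansion `∑_j ℏ^j • Gc j` in the
`C^∞(U)` topology, uniformly for `ℏ ∈ I`. -/
def HasCinftyExpansion {n m : ℕ} (I : Set ℝ) (U : Set (Eucl n))
    (Gh : ℝ → Eucl n → Eucl m) (Gc : ℕ → Eucl n → Eucl m) : Prop :=
  (∀ h ∈ I, ContDiffOn ℝ (⊤ : ℕ∞) (Gh h) U) ∧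
  (∀ j : ℕ, ContDiffOn ℝ (⊤ : ℕ∞) (Gc j) U) ∧
  ∀ (N : ℕ) (K : Set (Eucl n)), K ⊆ U → IsCompact K → ∀ d : ℕ,
    ∃ C > 0, ∀ h ∈ I, ∀ x ∈ K,
      ‖iteratedFDerivWithin ℝ d
        (fun y => Gh h y - ∑ j ∈ Finset.range (N + 1), h ^ j • Gc j y) U x‖
        ≤ C * h ^ (N + 1)

/-- `G0` is a smooth diffeomorphism from `U` onto an open set containing the
closure of `B`. -/
structure IsDiffeoOntoNbhd {n : ℕ} (G0 : Eucl n → Eucl n) (U B : Set (Eucl n)) : Prop where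
  contDiffOn : ContDiffOn ℝ (⊤ : ℕ∞) G0 U
  injOn : InjOn G0 U
  isOpen_image : IsOpen (G0 '' U)
  closure_subset_image : closure B ⊆ G0 '' U
  smooth_inv : ∃ F0 : Eucl n → Eucl n, ContDiffOn ℝ (⊤ : ℕ∞) F0 (G0 '' U) ∧
      ∀ x ∈ U, F0 (G0 x) = x

/-!
Fix `N`, let `e = G₀` and write the partial sum of order `N` of `∑_j h ^ j • G_j` as the
perturbation `e + h • H_N` of `e`. Iterating `x = e⁻¹ (y - h • H_N (h, x))` gains one power of `h`
at each step, so `N` steps give an approximate inverse `Φ_N (h, y)`, smooth in both variables, with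
residual `O(h ^ (N + 1))`. As `e + h • H_N` is bi-Lipschitz near each point, uniformly in small `h`,
any two approximate solutions are as close to each other as their residuals are small. Hence `Φ_N`
and `Φ_{N+1}` agree up to `O(h ^ (N + 1))`, and the Taylor coefficients of the `Φ_N` in `h`
stabilise to the coefficients of a formal inverse. A Borel sum `F_h` of that series differs from
`Φ_N` by `O(h ^ (N + 1))` for every `N`, and comparing `G_h` with `e + h • H_N` and `F_h` with `Φ_N`
bounds both compositions locally uniformly; compactness then makes the bounds uniform.
-/

open Filter Topology Asymptotics
open scoped ContDiff Nat

section Asymptotics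

variable {α E F G : Type*} [NormedAddCommGroup E] [NormedSpace ℝ E]
  [NormedAddCommGroup F] [NormedSpace ℝ F] [NormedAddCommGroup G] [NormedSpace ℝ G]

theorem isBigO_comp_sub_comp_of_contDiffAt {l : Filter α} {f : E → F} {x : E}
    (hf : ContDiffAt ℝ 1 f x) {u v : α → E} (hu : Tendsto u l (𝓝 x)) (hv : Tendsto v l (𝓝 x)) :
    (fun a => f (u a) - f (v a)) =O[l] fun a => u a - v a :=
  (hf.hasStrictFDerivAt (by simp)).isBigO_sub.comp_tendsto (hu.prodMk_nhds hv)

theorem isBigO_comp_prodMk_sub_of_contDiffAt {l : Filter α} {f : G × E → F} {s : G} {x : E}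
    (hf : ContDiffAt ℝ 1 f (s, x)) {t : α → G} {u v : α → E} (ht : Tendsto t l (𝓝 s))
    (hu : Tendsto u l (𝓝 x)) (hv : Tendsto v l (𝓝 x)) :
    (fun a => f (t a, u a) - f (t a, v a)) =O[l] fun a => u a - v a := by
  refine (isBigO_comp_sub_comp_of_contDiffAt hf (ht.prodMk_nhds hu) (ht.prodMk_nhds hv)).trans
    (IsBigO.of_bound 1 (Eventually.of_forall fun a => ?_))
  simp [Prod.norm_def]

theorem eq_zero_of_sum_pow_smul_isBigO {m : ℕ} {a : ℕ → F}
    (h : (fun t : ℝ => ∑ j ∈ Finset.range m, t ^ j • a j) =O[𝓝[≠] 0] fun t => t ^ m) :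
    ∀ j < m, a j = 0 := by
  induction m generalizing a with
  | zero => simp
  | succ m ih =>
    have a_zero : a 0 = 0 := by
      have hcont : Continuous fun t : ℝ => ∑ j ∈ Finset.range (m + 1), t ^ j • a j := by fun_prop
      have hpow : Tendsto (fun t : ℝ => t ^ (m + 1)) (𝓝[≠] 0) (𝓝 0) :=
        ((continuous_pow (m + 1)).tendsto' 0 0 (by simp)).mono_left nhdsWithin_le_nhds
      refine tendsto_nhds_unique ((hcont.tendsto' 0 (a 0) ?_).mono_left nhdsWithin_le_nhds)
        (h.trans_tendsto hpow)
      simp [Finset.sum_range_succ']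
    have shifted : (fun t : ℝ => ∑ j ∈ Finset.range m, t ^ j • a (j + 1)) =O[𝓝[≠] 0]
        fun t => t ^ m := by
      have hdiv := (isBigO_refl (fun t : ℝ => t⁻¹) (𝓝[≠] 0)).smul h
      refine hdiv.congr' ?_ ?_ <;> filter_upwards [self_mem_nhdsWithin] with t (ht : t ≠ 0)
      · simp only [Finset.sum_range_succ', a_zero, smul_zero, add_zero, Finset.smul_sum, smul_smul,
          pow_succ', inv_mul_cancel_left₀ ht]
      · simp only [smul_eq_mul, pow_succ', inv_mul_cancel_left₀ ht]
    rintro (_ | j) hj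
    · exact a_zero
    · exact ih shifted j (Nat.succ_lt_succ_iff.1 hj)

end Asymptotics

section Taylor

variable {E F : Type*} [NormedAddCommGroup E] [NormedSpace ℝ E]
  [NormedAddCommGroup F] [NormedSpace ℝ F]

theorem norm_map_add_sub_sum_iteratedFDeriv_le [CompleteSpace F] {f : E → F} {x y : E} {N : ℕ}
    {M : ℝ} (hf : ∀ t ∈ Icc (0 : ℝ) 1, ContDiffAt ℝ (N + 1) f (x + t • y))
    (hM : ∀ t ∈ Icc (0 : ℝ) 1, ‖iteratedFDeriv ℝ (N + 1) f (x + t • y)‖ ≤ M) :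
    ‖f (x + y) - ∑ k ∈ Finset.range (N + 1), (k ! : ℝ)⁻¹ • iteratedFDeriv ℝ k f x fun _ => y‖
      ≤ (N ! : ℝ)⁻¹ * M * ‖y‖ ^ (N + 1) := by
  have integrand_le : ∀ t ∈ uIoc (0 : ℝ) 1,
      ‖(1 - t) ^ N • iteratedFDeriv ℝ (N + 1) f (x + t • y) fun _ => y‖
        ≤ M * ‖y‖ ^ (N + 1) := by
    intro t ht
    rw [uIoc_of_le zero_le_one] at ht
    have weight_le : ‖(1 - t) ^ N‖ ≤ 1 := by
      rw [norm_pow, Real.norm_of_nonneg (by linarith [ht.2])]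
      exact pow_le_one₀ (by linarith [ht.2]) (by linarith [ht.1])
    have deriv_le : ‖iteratedFDeriv ℝ (N + 1) f (x + t • y) fun _ => y‖ ≤ M * ‖y‖ ^ (N + 1) :=
      ((iteratedFDeriv ℝ (N + 1) f _).le_of_opNorm_le (hM t ⟨ht.1.le, ht.2⟩) _).trans (by simp)
    rw [norm_smul]
    exact (mul_le_mul weight_le deriv_le (norm_nonneg _) zero_le_one).trans_eq (one_mul _)
  rw [map_add_eq_sum_add_integral_iteratedFDeriv hf, add_sub_cancel_left, norm_smul,
    Real.norm_of_nonneg (by positivity), mul_assoc]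
  gcongr
  exact (intervalIntegral.norm_integral_le_of_norm_le_const integrand_le).trans_eq (by simp)

theorem isBigO_map_add_sub_sum_iteratedFDeriv [CompleteSpace F] {f : E → F} {x₀ : E} {N : ℕ}
    (hf : ContDiffAt ℝ (N + 1) f x₀) :
    (fun q : E × E => f (q.1 + q.2)
      - ∑ k ∈ Finset.range (N + 1), (k ! : ℝ)⁻¹ • iteratedFDeriv ℝ k f q.1 fun _ => q.2)
      =O[𝓝 (x₀, 0)] fun q => ‖q.2‖ ^ (N + 1) := by
  have hcont : ContinuousAt (fun x => ‖iteratedFDeriv ℝ (N + 1) f x‖) x₀ :=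
    (hf.iteratedFDeriv_right (m := 0) (by simp)).continuousAt.norm
  set M := ‖iteratedFDeriv ℝ (N + 1) f x₀‖ + 1
  have hnear : ∀ᶠ x in 𝓝 x₀, ContDiffAt ℝ (N + 1) f x ∧ ‖iteratedFDeriv ℝ (N + 1) f x‖ < M :=
    (hf.eventually (by simp)).and (hcont.eventually_lt continuousAt_const (lt_add_one _))
  obtain ⟨r, hr, hball⟩ := Metric.eventually_nhds_iff_ball.1 hnear
  have hsum : Tendsto (fun q : E × E => q.1 + q.2) (𝓝 (x₀, 0)) (𝓝 x₀) :=
    continuous_add.tendsto' _ _ (add_zero x₀)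
  refine IsBigO.of_bound ((N ! : ℝ)⁻¹ * M) ?_
  filter_upwards [continuousAt_fst.eventually (ball_mem_nhds x₀ hr),
    hsum.eventually (ball_mem_nhds x₀ hr)] with q hq₁ hq₂
  have hseg : ∀ t ∈ Icc (0 : ℝ) 1, q.1 + t • q.2 ∈ ball x₀ r := fun t ht =>
    (convex_ball x₀ r).add_smul_mem hq₁ hq₂ ht
  rw [Real.norm_of_nonneg (by positivity)]
  exact norm_map_add_sub_sum_iteratedFDeriv_le (fun t ht => (hball _ (hseg t ht)).1)
    fun t ht => (hball _ (hseg t ht)).2.le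

/-- The `j`-th Taylor coefficient `(j!)⁻¹ ∂ₜʲ f(0, y)` of `t ↦ f (t, y)` at `0`. It is written with
the joint iterated derivative of `f`, which makes it visibly smooth in `y`. -/
def fstTaylorCoeff (f : ℝ × E → F) (j : ℕ) (y : E) : F :=
  (j ! : ℝ)⁻¹ • iteratedFDeriv ℝ j f (0, y) fun _ => (1, 0)

theorem contDiffAt_fstTaylorCoeff {f : ℝ × E → F} {y : E} (hf : ContDiffAt ℝ ∞ f (0, y)) (j : ℕ) :
    ContDiffAt ℝ ∞ (fstTaylorCoeff f j) y := by
  have hderiv : ContDiffAt ℝ ∞ (iteratedFDeriv ℝ j f) (0, y) :=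
    hf.iteratedFDeriv_right (by exact_mod_cast le_top)
  have hslice : ContDiffAt ℝ ∞ (fun z : E => iteratedFDeriv ℝ j f (0, z)) y :=
    hderiv.comp y (contDiffAt_const.prodMk contDiffAt_id)
  exact ((ContinuousMultilinearMap.apply ℝ (fun _ : Fin j => ℝ × E) F
    fun _ => (1, 0)).contDiff.contDiffAt.comp y hslice).const_smul _

theorem inv_factorial_smul_iteratedFDeriv_fst (f : ℝ × E → F) (j : ℕ) (t : ℝ) (y : E) :
    ((j ! : ℝ)⁻¹ • iteratedFDeriv ℝ j f (0, y) fun _ => (t, 0)) = t ^ j • fstTaylorCoeff f j y := by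
  have hmulti := (iteratedFDeriv ℝ j f (0, y)).map_smul_univ (fun _ => t) fun _ => (1, 0)
  simp only [Prod.smul_mk, smul_eq_mul, mul_one, smul_zero, Finset.prod_const, Finset.card_univ,
    Fintype.card_fin] at hmulti
  rw [hmulti, fstTaylorCoeff, smul_comm]

theorem sub_sum_fstTaylorCoeff_isBigO [CompleteSpace F] {f : ℝ × E → F} {y : E}
    (hf : ContDiffAt ℝ ∞ f (0, y)) (N : ℕ) :
    (fun p : ℝ × E => f p - ∑ j ∈ Finset.range (N + 1), p.1 ^ j • fstTaylorCoeff f j p.2)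
      =O[𝓝 (0, y)] fun p => p.1 ^ (N + 1) := by
  have hstep : Tendsto (fun p : ℝ × E => (((0 : ℝ), p.2), (p.1, (0 : E)))) (𝓝 (0, y))
      (𝓝 ((0, y), 0)) :=
    Continuous.tendsto' (by fun_prop) _ _ rfl
  have hf' : ContDiffAt ℝ (N + 1) f (0, y) := hf.of_le (by exact_mod_cast le_top)
  have htaylor := (isBigO_map_add_sub_sum_iteratedFDeriv hf').comp_tendsto hstep
  simp only [Function.comp_def, Prod.mk_add_mk, zero_add, add_zero,
    inv_factorial_smul_iteratedFDeriv_fst] at htaylor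
  exact htaylor.trans (IsBigO.of_bound 1 (by simp [Prod.norm_def]))

theorem fstTaylorCoeff_eq_of_isBigO [CompleteSpace F] {f g : ℝ × E → F} {y : E}
    (hf : ContDiffAt ℝ ∞ f (0, y)) (hg : ContDiffAt ℝ ∞ g (0, y)) {N : ℕ}
    (h : (fun p => f p - g p) =O[𝓝 (0, y)] fun p => p.1 ^ (N + 1)) {j : ℕ} (hj : j ≤ N) :
    fstTaylorCoeff f j y = fstTaylorCoeff g j y := by
  have hslice : Tendsto (fun t : ℝ => (t, y)) (𝓝[≠] 0) (𝓝 (0, y)) :=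
    ((continuous_id.prodMk continuous_const).tendsto' 0 (0, y) rfl).mono_left nhdsWithin_le_nhds
  have hdiff := (((sub_sum_fstTaylorCoeff_isBigO hg N).sub
    (sub_sum_fstTaylorCoeff_isBigO hf N)).add h).comp_tendsto hslice
  refine sub_eq_zero.1 (eq_zero_of_sum_pow_smul_isBigO
    (a := fun j => fstTaylorCoeff f j y - fstTaylorCoeff g j y) ?_ j (Nat.lt_succ_of_le hj))
  refine hdiff.congr_left fun t => ?_
  simp only [Function.comp_apply, smul_sub, Finset.sum_sub_distrib]
  abel

end Taylor

section ApproxInverse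

variable {E F : Type*} [TopologicalSpace E] [NormedAddCommGroup F] [NormedSpace ℝ F]

/-- The iterates, started at `e.symm y`, of the fixed point equation `x = e.symm (y - t • H (t, x))`
for the inverse of the perturbed map `x ↦ e x + t • H (t, x)`, as functions of `(t, y)`. -/
def approxInverse (e : OpenPartialHomeomorph E F) (H : ℝ × E → F) : ℕ → ℝ × F → E
  | 0, p => e.symm p.2
  | k + 1, p => e.symm (p.2 - p.1 • H (p.1, approxInverse e H k p))

theorem approxInverse_zero_left (e : OpenPartialHomeomorph E F) (H : ℝ × E → F) (k : ℕ) (y : F) :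
    approxInverse e H k (0, y) = e.symm y := by
  cases k <;> simp [approxInverse]

end ApproxInverse

section PerturbedInverse

variable {α E F : Type*} [NormedAddCommGroup E] [NormedSpace ℝ E]
  [NormedAddCommGroup F] [NormedSpace ℝ F]
  {e : OpenPartialHomeomorph E F} {H : ℝ × E → F} {y : F} {l : Filter α}

theorem isBigO_sub_perturbed (hy : y ∈ e.target) (he : ContDiffAt ℝ 1 e.symm y)
    (hH : ContDiffAt ℝ 1 H (0, e.symm y)) {t : α → ℝ} {u v : α → E} (ht : Tendsto t l (𝓝 0))
    (hu : Tendsto u l (𝓝 (e.symm y))) (hv : Tendsto v l (𝓝 (e.symm y))) :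
    (fun a => u a - v a) =O[l]
      fun a => e (u a) + t a • H (t a, u a) - (e (v a) + t a • H (t a, v a)) := by
  have hsource : e.symm y ∈ e.source := e.map_target hy
  have he_tendsto : Tendsto e (𝓝 (e.symm y)) (𝓝 y) := by
    simpa only [e.right_inv hy] using (e.continuousAt hsource).tendsto
  have unperturbed : (fun a => u a - v a) =O[l] fun a => e (u a) - e (v a) := by
    refine (isBigO_comp_sub_comp_of_contDiffAt he (he_tendsto.comp hu)
      (he_tendsto.comp hv)).congr' ?_ EventuallyEq.rfl
    filter_upwards [hu.eventually (e.eventually_left_inverse hsource),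
      hv.eventually (e.eventually_left_inverse hsource)] with a hua hva
    simp only [Function.comp_apply, hua, hva]
  have perturbation : (fun a => t a • (H (t a, u a) - H (t a, v a))) =o[l]
      fun a => e (u a) - e (v a) := by
    have hlip := (isBigO_comp_prodMk_sub_of_contDiffAt hH ht hu hv).trans unperturbed
    simpa only [one_smul] using ((isLittleO_one_iff ℝ).2 ht).smul_isBigO hlip
  refine unperturbed.trans (perturbation.right_isBigO_add.congr_right fun a => ?_)
  rw [smul_sub]
  abel

theorem contDiffAt_approxInverse {n : WithTop ℕ∞} (he : ContDiffAt ℝ n e.symm y)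
    (hH : ContDiffAt ℝ n H (0, e.symm y)) (k : ℕ) :
    ContDiffAt ℝ n (approxInverse e H k) (0, y) := by
  induction k with
  | zero => exact he.comp ((0 : ℝ), y) contDiffAt_snd
  | succ k ih =>
    have hHk : ContDiffAt ℝ n (fun p => H (p.1, approxInverse e H k p)) (0, y) := by
      refine ContDiffAt.comp (g := H) (0, y) ?_ (contDiffAt_fst.prodMk ih)
      rwa [approxInverse_zero_left]
    refine ContDiffAt.comp (g := e.symm) (0, y) ?_ (contDiffAt_snd.sub (contDiffAt_fst.smul hHk))
    simpa using he

theorem tendsto_approxInverse (he : ContDiffAt ℝ 1 e.symm y) (hH : ContDiffAt ℝ 1 H (0, e.symm y))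
    (k : ℕ) : Tendsto (approxInverse e H k) (𝓝 (0, y)) (𝓝 (e.symm y)) := by
  simpa only [approxInverse_zero_left] using (contDiffAt_approxInverse he hH k).continuousAt.tendsto

theorem tendsto_sub_smul_approxInverse (he : ContDiffAt ℝ 1 e.symm y)
    (hH : ContDiffAt ℝ 1 H (0, e.symm y)) (k : ℕ) :
    Tendsto (fun p : ℝ × F => p.2 - p.1 • H (p.1, approxInverse e H k p)) (𝓝 (0, y)) (𝓝 y) := by
  have hHΦ := hH.continuousAt.tendsto.comp
    (continuousAt_fst.tendsto.prodMk_nhds (tendsto_approxInverse he hH k))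
  simpa using continuousAt_snd.tendsto.sub (continuousAt_fst.tendsto.smul hHΦ)

theorem approxInverse_succ_sub_isBigO_residual (hy : y ∈ e.target) (he : ContDiffAt ℝ 1 e.symm y)
    (hH : ContDiffAt ℝ 1 H (0, e.symm y)) (k : ℕ) :
    (fun p => approxInverse e H (k + 1) p - approxInverse e H k p) =O[𝓝 (0, y)]
      fun p => e (approxInverse e H k p) + p.1 • H (p.1, approxInverse e H k p) - p.2 := by
  have hsource : e.symm y ∈ e.source := e.map_target hy
  have hΦ := tendsto_approxInverse he hH k
  have heΦ : Tendsto (fun p => e (approxInverse e H k p)) (𝓝 (0, y)) (𝓝 y) := by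
    simpa only [e.right_inv hy, Function.comp_def] using
      (e.continuousAt hsource).tendsto.comp hΦ
  refine ((isBigO_comp_sub_comp_of_contDiffAt he (tendsto_sub_smul_approxInverse he hH k)
    heΦ).congr' ?_ EventuallyEq.rfl).trans (IsBigO.of_bound 1 (Eventually.of_forall fun p => ?_))
  · filter_upwards [hΦ.eventually (e.eventually_left_inverse hsource)] with p hp
    rw [hp, approxInverse]
  · rw [one_mul, ← norm_neg]
    exact (congrArg norm (by abel)).le

theorem approxInverse_residual_isBigO (hy : y ∈ e.target) (he : ContDiffAt ℝ 1 e.symm y)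
    (hH : ContDiffAt ℝ 1 H (0, e.symm y)) (k : ℕ) :
    (fun p : ℝ × F => e (approxInverse e H k p) + p.1 • H (p.1, approxInverse e H k p) - p.2)
      =O[𝓝 (0, y)] fun p => p.1 ^ (k + 1) := by
  have hfst : Tendsto (Prod.fst : ℝ × F → ℝ) (𝓝 (0, y)) (𝓝 0) := continuousAt_fst
  have hsnd : Tendsto (Prod.snd : ℝ × F → F) (𝓝 (0, y)) (𝓝 y) := continuousAt_snd
  have hΦ := tendsto_approxInverse he hH
  induction k with
  | zero =>
    have hHΦ := hH.continuousAt.tendsto.comp (hfst.prodMk_nhds (hΦ 0))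
    refine ((isBigO_refl Prod.fst _).smul (hHΦ.isBigO_one ℝ)).congr' ?_ (by simp)
    filter_upwards [hsnd.eventually (e.eventually_right_inverse hy)] with p hp
    simp only [approxInverse, hp, add_sub_cancel_left, Function.comp_apply]
  | succ k ih =>
    have hright : ∀ᶠ p in 𝓝 (0, y), e (approxInverse e H (k + 1) p)
        = p.2 - p.1 • H (p.1, approxInverse e H k p) :=
      (tendsto_sub_smul_approxInverse he hH k).eventually (e.eventually_right_inverse hy)
    have hincr := (approxInverse_succ_sub_isBigO_residual hy he hH k).trans ih
    have hlip := isBigO_comp_prodMk_sub_of_contDiffAt hH hfst (hΦ (k + 1)) (hΦ k)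
    refine ((isBigO_refl Prod.fst _).smul (hlip.trans hincr)).congr' ?_
      (Eventually.of_forall fun p => (pow_succ' p.1 (k + 1)).symm)
    filter_upwards [hright] with p hp
    rw [hp, smul_sub]
    abel

theorem isBigO_sub_approxInverse (hy : y ∈ e.target) (he : ContDiffAt ℝ 1 e.symm y)
    (hH : ContDiffAt ℝ 1 H (0, e.symm y)) {t : α → ℝ} {u : α → E} {w : α → F} {k : ℕ}
    (ht : Tendsto t l (𝓝 0)) (hu : Tendsto u l (𝓝 (e.symm y))) (hw : Tendsto w l (𝓝 y))
    (h : (fun a => e (u a) + t a • H (t a, u a) - w a) =O[l] fun a => t a ^ (k + 1)) :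
    (fun a => u a - approxInverse e H k (t a, w a)) =O[l] fun a => t a ^ (k + 1) := by
  have htw := ht.prodMk_nhds hw
  have hresidual := (approxInverse_residual_isBigO hy he hH k).comp_tendsto htw
  refine (isBigO_sub_perturbed hy he hH ht hu ((tendsto_approxInverse he hH k).comp htw)).trans
    ((h.sub hresidual).congr_left fun a => ?_)
  simp only [Function.comp_apply, sub_sub_sub_cancel_right]

end PerturbedInverse

section HigherPart

variable {E F : Type*} [NormedAddCommGroup F] [NormedSpace ℝ F]

/-- `∑_{j < k} t ^ j • Gc (j + 1) x`, the perturbation for which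
`Gc 0 x + t • higherPart Gc k (t, x)` is the partial sum of order `k` of `∑_j t ^ j • Gc j x`. -/
def higherPart (Gc : ℕ → E → F) (k : ℕ) (p : ℝ × E) : F :=
  ∑ j ∈ Finset.range k, p.1 ^ j • Gc (j + 1) p.2

theorem sum_pow_smul_eq_add_higherPart (Gc : ℕ → E → F) (k : ℕ) (t : ℝ) (x : E) :
    ∑ j ∈ Finset.range (k + 1), t ^ j • Gc j x = Gc 0 x + t • higherPart Gc k (t, x) := by
  simp only [higherPart, Finset.sum_range_succ', Finset.smul_sum, smul_smul, pow_succ', pow_zero,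
    one_smul, add_comm]

theorem smul_higherPart_succ (Gc : ℕ → E → F) (k : ℕ) (t : ℝ) (x : E) :
    t • higherPart Gc (k + 1) (t, x) = t • higherPart Gc k (t, x) + t ^ (k + 1) • Gc (k + 1) x := by
  simp only [higherPart, Finset.sum_range_succ, smul_add, smul_smul, pow_succ']

end HigherPart

section InverseCoeff

variable {E F : Type*} [NormedAddCommGroup E] [NormedSpace ℝ E]
  [NormedAddCommGroup F] [NormedSpace ℝ F]
  {e : OpenPartialHomeomorph E F} {Gc : ℕ → E → F} {y : F}

theorem contDiffAt_higherPart {x : E} (hGc : ∀ j, ContDiffAt ℝ ∞ (Gc j) x) (k : ℕ) (t : ℝ) :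
    ContDiffAt ℝ ∞ (higherPart Gc k) (t, x) :=
  ContDiffAt.sum fun j _ => (contDiffAt_fst.pow j).smul ((hGc (j + 1)).comp (t, x) contDiffAt_snd)

/-- The coefficients of the inverse, as a formal power series in `t`, of `∑_j t ^ j • Gc j`, whose
leading term `Gc 0` is `e`. -/
def inverseCoeff (e : OpenPartialHomeomorph E F) (Gc : ℕ → E → F) (j : ℕ) : F → E :=
  fstTaylorCoeff (approxInverse e (higherPart Gc j) j) j

theorem inverseCoeff_zero (e : OpenPartialHomeomorph E F) (Gc : ℕ → E → F) :
    inverseCoeff e Gc 0 = e.symm := by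
  ext1 y
  simp [inverseCoeff, fstTaylorCoeff, approxInverse]

theorem contDiffAt_inverseCoeff (he : ContDiffAt ℝ ∞ e.symm y)
    (hGc : ∀ j, ContDiffAt ℝ ∞ (Gc j) (e.symm y)) (j : ℕ) :
    ContDiffAt ℝ ∞ (inverseCoeff e Gc j) y :=
  contDiffAt_fstTaylorCoeff (contDiffAt_approxInverse he (contDiffAt_higherPart hGc j 0) j) j

theorem approxInverse_succ_sub_isBigO (hy : y ∈ e.target) (he : ContDiffAt ℝ ∞ e.symm y)
    (hGc : ∀ j, ContDiffAt ℝ ∞ (Gc j) (e.symm y)) (k : ℕ) :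
    (fun p => approxInverse e (higherPart Gc (k + 1)) (k + 1) p
      - approxInverse e (higherPart Gc k) k p) =O[𝓝 (0, y)] fun p => p.1 ^ (k + 1) := by
  have he₁ : ContDiffAt ℝ 1 e.symm y := he.of_le (by simp)
  have hH : ∀ k, ContDiffAt ℝ 1 (higherPart Gc k) (0, e.symm y) := fun k =>
    (contDiffAt_higherPart hGc k 0).of_le (by simp)
  have hΦ := tendsto_approxInverse he₁ (hH (k + 1)) (k + 1)
  refine isBigO_sub_approxInverse hy he₁ (hH k) continuousAt_fst.tendsto hΦ
    continuousAt_snd.tendsto ?_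
  have hresidual : (fun p : ℝ × F => e (approxInverse e (higherPart Gc (k + 1)) (k + 1) p)
      + p.1 • higherPart Gc (k + 1) (p.1, approxInverse e (higherPart Gc (k + 1)) (k + 1) p) - p.2)
      =O[𝓝 (0, y)] fun p => p.1 ^ (k + 1) :=
    (approxInverse_residual_isBigO hy he₁ (hH (k + 1)) (k + 1)).trans
      ((isLittleO_pow_pow (Nat.lt_succ_self (k + 1))).isBigO.comp_tendsto continuousAt_fst)
  have hlast : (fun p : ℝ × F => p.1 ^ (k + 1)
      • Gc (k + 1) (approxInverse e (higherPart Gc (k + 1)) (k + 1) p))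
      =O[𝓝 (0, y)] fun p => p.1 ^ (k + 1) := by
    simpa using (isBigO_refl (fun p : ℝ × F => p.1 ^ (k + 1)) _).smul
      (((hGc (k + 1)).continuousAt.tendsto.comp hΦ).isBigO_one ℝ)
  refine (hresidual.sub hlast).congr_left fun p => ?_
  rw [smul_higherPart_succ]
  abel

theorem fstTaylorCoeff_approxInverse [CompleteSpace E] (hy : y ∈ e.target)
    (he : ContDiffAt ℝ ∞ e.symm y) (hGc : ∀ j, ContDiffAt ℝ ∞ (Gc j) (e.symm y)) {j N : ℕ}
    (hjN : j ≤ N) :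
    fstTaylorCoeff (approxInverse e (higherPart Gc N) N) j y = inverseCoeff e Gc j y := by
  have hΦ := fun k => contDiffAt_approxInverse he (contDiffAt_higherPart hGc k 0) k
  induction N, hjN using Nat.le_induction with
  | base => rfl
  | succ N hN ih =>
    rw [← ih]
    exact fstTaylorCoeff_eq_of_isBigO (hΦ (N + 1)) (hΦ N)
      (approxInverse_succ_sub_isBigO hy he hGc N) hN

theorem approxInverse_sub_sum_inverseCoeff_isBigO [CompleteSpace E] (hy : y ∈ e.target)
    (he : ∀ z ∈ e.target, ContDiffAt ℝ ∞ e.symm z)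
    (hGc : ∀ j, ∀ x ∈ e.source, ContDiffAt ℝ ∞ (Gc j) x) (N : ℕ) :
    (fun p : ℝ × F => approxInverse e (higherPart Gc N) N p
      - ∑ j ∈ Finset.range (N + 1), p.1 ^ j • inverseCoeff e Gc j p.2)
      =O[𝓝 (0, y)] fun p => p.1 ^ (N + 1) := by
  have hGc' : ∀ z ∈ e.target, ∀ j, ContDiffAt ℝ ∞ (Gc j) (e.symm z) := fun z hz j =>
    hGc j _ (e.map_target hz)
  refine (sub_sum_fstTaylorCoeff_isBigO (contDiffAt_approxInverse (he y hy)
    (contDiffAt_higherPart (hGc' y hy) N 0) N) N).congr' ?_ EventuallyEq.rfl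
  filter_upwards [continuousAt_snd.eventually (e.open_target.mem_nhds hy)] with p hp
  congr 1
  refine Finset.sum_congr rfl fun j hj => ?_
  rw [fstTaylorCoeff_approxInverse hp (he _ hp) (hGc' _ hp)
    (Nat.lt_succ_iff.1 (Finset.mem_range.1 hj))]

end InverseCoeff

section BorelSum

theorem exists_tendsto_atTop_forall_lt_mul_le (b : ℕ → ℝ) {ε : ℕ → ℝ} (hε : ∀ j, 0 < ε j) :
    ∃ M : ℝ → ℕ, Tendsto M (𝓝[>] 0) atTop ∧ ∀ h, ∀ j < M h, h * b j ≤ ε j := by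
  classical
  let M : ℝ → ℕ := fun h => Nat.findGreatest (fun m => ∀ j < m, h * b j ≤ ε j) ⌊h⁻¹⌋₊
  refine ⟨M, tendsto_atTop.2 fun m => ?_, fun h => ?_⟩
  · have hfloor : ∀ᶠ h : ℝ in 𝓝[>] 0, m ≤ ⌊h⁻¹⌋₊ :=
      (tendsto_nat_floor_atTop.comp tendsto_inv_nhdsGT_zero).eventually_ge_atTop m
    have hsmall : ∀ j, ∀ᶠ h : ℝ in 𝓝[>] 0, h * b j ≤ ε j := fun j =>
      (((continuous_id.mul continuous_const).tendsto' 0 0 (zero_mul (b j))).mono_left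
        nhdsWithin_le_nhds).eventually_le_const (hε j)
    filter_upwards [hfloor, (finite_Iio m).eventually_all.2 fun j _ => hsmall j] with h hm hj
    exact Nat.le_findGreatest hm hj
  · exact Nat.findGreatest_spec (P := fun m => ∀ j < m, h * b j ≤ ε j) (Nat.zero_le _) (by simp)

theorem exists_sum_Ico_pow_mul_le_of_tendsto_atTop {M : ℝ → ℕ} (hM : Tendsto M (𝓝[>] 0) atTop)
    {a : ℕ → ℝ} (ha : ∀ j, 0 ≤ a j) (N : ℕ) :
    ∃ C, ∀ h > 0, ∑ j ∈ Finset.Ico (M h) N, h ^ j * a j ≤ C * h ^ N := by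
  obtain ⟨δ, hδ : 0 < δ, hδN⟩ := mem_nhdsGT_iff_exists_Ioo_subset.1 (hM.eventually_ge_atTop N)
  refine ⟨∑ j ∈ Finset.range N, a j / δ ^ (N - j), fun h hh => ?_⟩
  rcases lt_or_ge h δ with hhδ | hδh
  · rw [Finset.Ico_eq_empty_of_le (hδN ⟨hh, hhδ⟩), Finset.sum_empty]
    exact mul_nonneg (Finset.sum_nonneg fun j _ => div_nonneg (ha j) (by positivity))
      (by positivity)
  · rw [Finset.sum_mul]
    refine (Finset.sum_le_sum_of_subset_of_nonneg (t := Finset.range N) (fun j hj => ?_)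
      fun j _ _ => mul_nonneg (by positivity) (ha j)).trans (Finset.sum_le_sum fun j hj => ?_)
    · exact Finset.mem_range.2 (Finset.mem_Ico.1 hj).2
    · have hjN : j ≤ N := (Finset.mem_range.1 hj).le
      calc h ^ j * a j = a j / δ ^ (N - j) * (h ^ j * δ ^ (N - j)) := by field_simp
        _ ≤ a j / δ ^ (N - j) * (h ^ j * h ^ (N - j)) := by
          have := div_nonneg (ha j) (pow_nonneg hδ.le (N - j))
          gcongr
        _ = a j / δ ^ (N - j) * h ^ N := by rw [pow_mul_pow_sub h hjN]

theorem exists_sum_Ico_pow_mul_le_of_mul_le_geometric {M : ℝ → ℕ} {a : ℕ → ℝ} (ha : ∀ j, 0 ≤ a j)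
    {J : ℕ} (hM : ∀ h > 0, 0 < M h → h ≤ 1)
    (hMa : ∀ h > 0, ∀ j < M h, J ≤ j → h * a j ≤ (1 / 2) ^ j) (N : ℕ) :
    ∃ C, ∀ h > 0, ∑ j ∈ Finset.Ico N (M h), h ^ j * a j ≤ C * h ^ N := by
  set c : ℕ → ℝ := fun j => (if j ∈ Finset.range (max J (N + 1)) then a j else 0) + (1 / 2) ^ j
  have hc : Summable c := (summable_of_ne_finset_zero fun j hj => if_neg hj).add
    summable_geometric_two
  have hc_nonneg : ∀ j, 0 ≤ c j := fun j => by
    have := ha j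
    positivity
  have hterm : ∀ h > 0, ∀ j ∈ Finset.Ico N (M h), h ^ j * a j ≤ c j * h ^ N := by
    intro h hh j hj
    obtain ⟨hNj, hjM⟩ := Finset.mem_Ico.1 hj
    have hh_one : h ≤ 1 := hM h hh (j.zero_le.trans_lt hjM)
    by_cases hjJ : j ∈ Finset.range (max J (N + 1))
    · have ha_le : a j ≤ c j := by
        simp only [c, if_pos hjJ]
        exact le_add_of_nonneg_right (by positivity)
      calc h ^ j * a j ≤ h ^ N * c j :=
          mul_le_mul (pow_le_pow_of_le_one hh.le hh_one hNj) ha_le (ha j) (by positivity)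
        _ = c j * h ^ N := mul_comm _ _
    · have hle : J ≤ j ∧ N + 1 ≤ j := by simpa using hjJ
      calc h ^ j * a j ≤ h ^ (N + 1) * a j :=
          mul_le_mul_of_nonneg_right (pow_le_pow_of_le_one hh.le hh_one hle.2) (ha j)
        _ = h * a j * h ^ N := by ring
        _ ≤ c j * h ^ N := by
          gcongr
          simpa only [c, if_neg hjJ, zero_add] using hMa h hh j hjM hle.1
  refine ⟨∑' j, c j, fun h hh => (Finset.sum_le_sum (hterm h hh)).trans ?_⟩
  rw [← Finset.sum_mul]
  gcongr
  exact hc.sum_le_tsum _ fun j _ => hc_nonneg j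

theorem exists_truncation_forall_sum_Ico_pow_mul_le {A : ℕ → ℕ → ℝ} (hA : ∀ k j, 0 ≤ A k j) :
    ∃ M : ℝ → ℕ, ∀ k N, ∃ C > 0, ∀ h > 0,
      ∑ j ∈ Finset.Ico N (M h), h ^ j * A k j + ∑ j ∈ Finset.Ico (M h) N, h ^ j * A k j
        ≤ C * h ^ N := by
  -- `1 ≤ b j` confines the truncated sums to `h ≤ 1`, and `b` eventually dominates every `A k`.
  set b : ℕ → ℝ := fun j => 1 + ∑ k ∈ Finset.range (j + 1), A k j
  have one_le_b : ∀ j, 1 ≤ b j := fun j =>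
    le_add_of_nonneg_right (Finset.sum_nonneg fun k _ => hA k j)
  have A_le_b : ∀ k j, k ≤ j → A k j ≤ b j := fun k j hkj =>
    (Finset.single_le_sum (fun i _ => hA i j) (Finset.mem_range_succ_iff.2 hkj)).trans
      (le_add_of_nonneg_left zero_le_one)
  obtain ⟨M, hM, hMb⟩ := exists_tendsto_atTop_forall_lt_mul_le b (ε := fun j => (1 / 2) ^ j)
    fun j => by positivity
  have hM_one : ∀ h > 0, 0 < M h → h ≤ 1 := fun h hh hMh =>
    (le_mul_of_one_le_right hh.le (one_le_b 0)).trans (by simpa using hMb h 0 hMh)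
  have hMA : ∀ k, ∀ h > 0, ∀ j < M h, k ≤ j → h * A k j ≤ (1 / 2) ^ j := fun k h hh j hj hkj =>
    (mul_le_mul_of_nonneg_left (A_le_b k j hkj) hh.le).trans (hMb h j hj)
  refine ⟨M, fun k N => ?_⟩
  obtain ⟨C₁, hC₁⟩ := exists_sum_Ico_pow_mul_le_of_mul_le_geometric (hA k) hM_one (hMA k) N
  obtain ⟨C₂, hC₂⟩ := exists_sum_Ico_pow_mul_le_of_tendsto_atTop hM (hA k) N
  refine ⟨max (C₁ + C₂) 1, lt_max_of_lt_right one_pos, fun h hh => ?_⟩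
  calc _ ≤ (C₁ + C₂) * h ^ N := by
        rw [add_mul]
        exact add_le_add (hC₁ h hh) (hC₂ h hh)
    _ ≤ max (C₁ + C₂) 1 * h ^ N := by
        gcongr
        exact le_max_left _ _

theorem exists_compact_exhaustion_of_isOpen {X : Type*} [TopologicalSpace X] [LocallyCompactSpace X]
    [SecondCountableTopology X] {V : Set X} (hV : IsOpen V) :
    ∃ K : ℕ → Set X, (∀ k, IsCompact (K k)) ∧ (∀ k, K k ⊆ V) ∧ Monotone K ∧
      ∀ L ⊆ V, IsCompact L → ∃ k, L ⊆ K k := by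
  have : LocallyCompactSpace V := hV.locallyCompactSpace
  let K : CompactExhaustion V := default
  refine ⟨fun k => (↑) '' K k, fun k => (K.isCompact k).image continuous_subtype_val,
    fun k => Subtype.coe_image_subset _ _, fun k l hkl => image_mono (K.subset hkl), ?_⟩
  intro L hLV hL
  have hpre : IsCompact ((↑) ⁻¹' L : Set V) :=
    Topology.IsInducing.subtypeVal.isCompact_preimage' hL (by simpa using hLV)
  obtain ⟨k, hk⟩ := K.exists_superset_of_isCompact hpre
  exact ⟨k, fun x hx => ⟨⟨x, hLV hx⟩, hk hx, rfl⟩⟩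

variable {E F : Type*} [NormedAddCommGroup E] [NormedSpace ℝ E]
  [NormedAddCommGroup F] [NormedSpace ℝ F] {V : Set E}

theorem exists_forall_norm_iteratedFDerivWithin_le (hV : UniqueDiffOn ℝ V) {f : E → F}
    (hf : ContDiffOn ℝ ∞ f V) {K : Set E} (hKV : K ⊆ V) (hK : IsCompact K) (k : ℕ) :
    ∃ C ≥ 0, ∀ d ≤ k, ∀ x ∈ K, ‖iteratedFDerivWithin ℝ d f V x‖ ≤ C := by
  have hcont : ContinuousOn
      (fun x => ∑ d ∈ Finset.range (k + 1), ‖iteratedFDerivWithin ℝ d f V x‖) K :=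
    continuousOn_finsetSum _ fun d _ =>
      ((hf.continuousOn_iteratedFDerivWithin (by exact_mod_cast le_top) hV).mono hKV).norm
  obtain ⟨C, hC⟩ := hK.exists_bound_of_continuousOn hcont
  refine ⟨max C 0, le_max_right _ _, fun d hd x hx => ?_⟩
  calc ‖iteratedFDerivWithin ℝ d f V x‖
      ≤ ∑ d ∈ Finset.range (k + 1), ‖iteratedFDerivWithin ℝ d f V x‖ :=
        Finset.single_le_sum (f := fun d => ‖iteratedFDerivWithin ℝ d f V x‖)
          (fun _ _ => norm_nonneg _) (Finset.mem_range_succ_iff.2 hd)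
    _ ≤ max C 0 := (le_abs_self _).trans ((hC x hx).trans (le_max_left _ _))

theorem norm_iteratedFDerivWithin_sum_smul_le {ι : Type*} {s : Finset ι} {c : ι → ℝ}
    {f : ι → E → F} {a : ι → ℝ} {d : ℕ} {x : E} (hV : UniqueDiffOn ℝ V) (hx : x ∈ V)
    (hf : ∀ j ∈ s, ContDiffWithinAt ℝ d (f j) V x)
    (ha : ∀ j ∈ s, ‖iteratedFDerivWithin ℝ d (f j) V x‖ ≤ a j) :
    ‖iteratedFDerivWithin ℝ d (fun y => ∑ j ∈ s, c j • f j y) V x‖ ≤ ∑ j ∈ s, |c j| * a j := by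
  have hsum : (fun y => ∑ j ∈ s, c j • f j y) = ∑ j ∈ s, c j • f j := by
    ext y
    simp only [Finset.sum_apply, Pi.smul_apply]
  rw [hsum, iteratedFDerivWithin_sum_apply (f := fun j => c j • f j) hV hx fun j hj =>
    (hf j hj).const_smul (c j)]
  refine norm_sum_le_of_le s fun j hj => ?_
  rw [iteratedFDerivWithin_const_smul_apply (hf j hj) hV hx, norm_smul, Real.norm_eq_abs]
  exact mul_le_mul_of_nonneg_left (ha j hj) (abs_nonneg _)

theorem norm_iteratedFDerivWithin_sum_range_sub_sum_range_le {f : ℕ → E → F} {a : ℕ → ℝ} {d : ℕ}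
    {x : E} (hV : UniqueDiffOn ℝ V) (hx : x ∈ V) (hf : ∀ j, ContDiffWithinAt ℝ d (f j) V x)
    (ha : ∀ j, ‖iteratedFDerivWithin ℝ d (f j) V x‖ ≤ a j) {h : ℝ} (hh : 0 ≤ h) (M N : ℕ) :
    ‖iteratedFDerivWithin ℝ d (fun y => ∑ j ∈ Finset.range M, h ^ j • f j y
      - ∑ j ∈ Finset.range N, h ^ j • f j y) V x‖
      ≤ ∑ j ∈ Finset.Ico N M, h ^ j * a j + ∑ j ∈ Finset.Ico M N, h ^ j * a j := by
  have hIco : ∀ K L : ℕ, ‖iteratedFDerivWithin ℝ d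
      (fun y => ∑ j ∈ Finset.Ico K L, h ^ j • f j y) V x‖ ≤ ∑ j ∈ Finset.Ico K L, h ^ j * a j := by
    intro K L
    simpa only [abs_of_nonneg (pow_nonneg hh _)] using norm_iteratedFDerivWithin_sum_smul_le
      (s := Finset.Ico K L) (c := (h ^ ·)) hV hx (fun j _ => hf j) fun j _ => ha j
  rcases le_total N M with hNM | hMN
  · simpa only [← Finset.sum_Ico_eq_sub _ hNM, Finset.Ico_eq_empty_of_le hNM, Finset.sum_empty,
      add_zero] using hIco N M
  · have hneg : (fun y => ∑ j ∈ Finset.range M, h ^ j • f j y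
        - ∑ j ∈ Finset.range N, h ^ j • f j y) = -fun y => ∑ j ∈ Finset.Ico M N, h ^ j • f j y := by
      ext y
      rw [Pi.neg_apply, Finset.sum_Ico_eq_sub _ hMN, neg_sub]
    rw [hneg, iteratedFDerivWithin_neg_apply hV hx, norm_neg, Finset.Ico_eq_empty_of_le hMN,
      Finset.sum_empty, zero_add]
    exact hIco M N

theorem exists_borel_truncation [ProperSpace E] (hV : IsOpen V) {f : ℕ → E → F}
    (hf : ∀ j, ContDiffOn ℝ ∞ (f j) V) :
    ∃ M : ℝ → ℕ, ∀ N, ∀ K ⊆ V, IsCompact K → ∀ d, ∃ C > 0, ∀ h > 0, ∀ x ∈ K,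
      ‖iteratedFDerivWithin ℝ d (fun y => ∑ j ∈ Finset.range (M h), h ^ j • f j y
        - ∑ j ∈ Finset.range N, h ^ j • f j y) V x‖ ≤ C * h ^ N := by
  obtain ⟨K, hK, hKV, hK_mono, hK_exhaust⟩ := exists_compact_exhaustion_of_isOpen hV
  choose A hA_nonneg hA using fun k j =>
    exists_forall_norm_iteratedFDerivWithin_le hV.uniqueDiffOn (hf j) (hKV k) (hK k) k
  obtain ⟨M, hM⟩ := exists_truncation_forall_sum_Ico_pow_mul_le hA_nonneg
  refine ⟨M, fun N L hLV hL d => ?_⟩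
  obtain ⟨m, hLm⟩ := hK_exhaust L hLV hL
  obtain ⟨C, hC_pos, hC⟩ := hM (max m d) N
  refine ⟨C, hC_pos, fun h hh x hx => ?_⟩
  have hxK : x ∈ K (max m d) := hK_mono (le_max_left m d) (hLm hx)
  have hfx : ∀ j, ContDiffWithinAt ℝ d (f j) V x := fun j =>
    (hf j x (hLV hx)).of_le (by exact_mod_cast le_top)
  exact (norm_iteratedFDerivWithin_sum_range_sub_sum_range_le hV.uniqueDiffOn (hLV hx) hfx
    (fun j => hA (max m d) j d (le_max_right m d) x hxK) hh.le (M h) N).trans (hC h hh)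

theorem exists_hasCinftyExpansion {n m : ℕ} {I : Set ℝ} (hI : I ⊆ Ioi 0) {V : Set (Eucl n)}
    (hV : IsOpen V) {Fc : ℕ → Eucl n → Eucl m} (hFc : ∀ j, ContDiffOn ℝ ∞ (Fc j) V) :
    ∃ Fh, HasCinftyExpansion I V Fh Fc := by
  obtain ⟨M, hM⟩ := exists_borel_truncation hV hFc
  refine ⟨fun h y => ∑ j ∈ Finset.range (M h), h ^ j • Fc j y,
    fun h _ => ContDiffOn.sum fun j _ => (hFc j).const_smul _, hFc, fun N K hKV hK d => ?_⟩
  obtain ⟨C, hC_pos, hC⟩ := hM (N + 1) K hKV hK d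
  exact ⟨C, hC_pos, fun h hh => hC h (hI hh)⟩

end BorelSum

section AsymptoticExpansionAt

variable {E F : Type*} [NormedAddCommGroup E] [NormedAddCommGroup F] [NormedSpace ℝ F]

/-- `∑_j h ^ j • Gc j` is an asymptotic expansion of `Gh h`, as `h` tends to `0` along `l`,
uniformly near `x`: the undifferentiated, localized form of `HasCinftyExpansion`. -/
def HasAsymptoticExpansionAt (l : Filter ℝ) (Gh : ℝ → E → F) (Gc : ℕ → E → F) (x : E) : Prop :=
  ∀ N, (fun p : ℝ × E => Gh p.1 p.2 - ∑ j ∈ Finset.range (N + 1), p.1 ^ j • Gc j p.2)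
    =O[l ×ˢ 𝓝 x] fun p => p.1 ^ (N + 1)

theorem HasCinftyExpansion.hasAsymptoticExpansionAt {n m : ℕ} {I : Set ℝ} {U : Set (Eucl n)}
    {Gh : ℝ → Eucl n → Eucl m} {Gc : ℕ → Eucl n → Eucl m} (hG : HasCinftyExpansion I U Gh Gc)
    {x : Eucl n} (hU : U ∈ 𝓝 x) : HasAsymptoticExpansionAt (𝓝[I] 0) Gh Gc x := by
  intro N
  obtain ⟨r, hr, hrU⟩ := Metric.nhds_basis_closedBall.mem_iff.1 hU
  obtain ⟨C, hC_pos, hC⟩ := hG.2.2 N (closedBall x r) hrU (isCompact_closedBall x r) 0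
  refine IsBigO.of_bound C ?_
  filter_upwards [prod_mem_prod self_mem_nhdsWithin (closedBall_mem_nhds x hr)] with p hp
  have hbound := hC p.1 hp.1 p.2 hp.2
  rw [norm_iteratedFDerivWithin_zero] at hbound
  exact hbound.trans (mul_le_mul_of_nonneg_left (le_abs_self _) hC_pos.le)

variable {l : Filter ℝ} {Gh : ℝ → E → F} {Fh : ℝ → F → E} {Gc : ℕ → E → F}
  {e : OpenPartialHomeomorph E F} {x : E} {y : F}

namespace HasAsymptoticExpansionAt

theorem tendsto (hG : HasAsymptoticExpansionAt l Gh Gc x) (hl : l ≤ 𝓝 0)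
    (hGc : ContinuousAt (Gc 0) x) :
    Tendsto (fun p : ℝ × E => Gh p.1 p.2) (l ×ˢ 𝓝 x) (𝓝 (Gc 0 x)) := by
  have hfst : Tendsto (fun p : ℝ × E => p.1 ^ (0 + 1)) (l ×ˢ 𝓝 x) (𝓝 0) := by
    simpa using tendsto_fst.mono_right hl
  simpa using ((hG 0).trans_tendsto hfst).add (hGc.tendsto.comp tendsto_snd)

theorem sub_higherPart_isBigO (hG : HasAsymptoticExpansionAt l Gh Gc x) (hGe : Gc 0 = e) (N : ℕ) :
    (fun p : ℝ × E => Gh p.1 p.2 - (e p.2 + p.1 • higherPart Gc N p)) =O[l ×ˢ 𝓝 x]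
      fun p => p.1 ^ (N + 1) := by
  simpa only [sum_pow_smul_eq_add_higherPart, hGe] using hG N

variable [NormedSpace ℝ E]

theorem sub_approxInverse_isBigO [CompleteSpace E]
    (hF : HasAsymptoticExpansionAt l Fh (inverseCoeff e Gc) y) (hl : l ≤ 𝓝 0) (hy : y ∈ e.target)
    (he : ∀ z ∈ e.target, ContDiffAt ℝ ∞ e.symm z)
    (hGc : ∀ j, ∀ x ∈ e.source, ContDiffAt ℝ ∞ (Gc j) x) (N : ℕ) :
    (fun p : ℝ × F => Fh p.1 p.2 - approxInverse e (higherPart Gc N) N p) =O[l ×ˢ 𝓝 y]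
      fun p => p.1 ^ (N + 1) := by
  have happrox := (approxInverse_sub_sum_inverseCoeff_isBigO hy he hGc N).mono
    ((prod_mono_left _ hl).trans_eq nhds_prod_eq.symm)
  simpa only [sub_sub_sub_cancel_right] using (hF N).sub happrox

theorem comp_inverse_sub_isBigO [CompleteSpace E]
    (hG : HasAsymptoticExpansionAt l Gh Gc (e.symm y))
    (hF : HasAsymptoticExpansionAt l Fh (inverseCoeff e Gc) y) (hl : l ≤ 𝓝 0) (hy : y ∈ e.target)
    (he : ∀ z ∈ e.target, ContDiffAt ℝ ∞ e.symm z)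
    (hGc : ∀ j, ∀ x ∈ e.source, ContDiffAt ℝ ∞ (Gc j) x) (hGe : Gc 0 = e) (N : ℕ) :
    (fun p : ℝ × F => Gh p.1 (Fh p.1 p.2) - p.2) =O[l ×ˢ 𝓝 y] fun p => p.1 ^ (N + 1) := by
  have hlprod : l ×ˢ 𝓝 y ≤ 𝓝 (0, y) := (prod_mono_left _ hl).trans_eq nhds_prod_eq.symm
  have he₁ : ContDiffAt ℝ 1 e.symm y := (he y hy).of_le (by simp)
  have hGc' : ∀ j, ContDiffAt ℝ ∞ (Gc j) (e.symm y) := fun j => hGc j _ (e.map_target hy)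
  have hH : ContDiffAt ℝ 1 (higherPart Gc N) (0, e.symm y) :=
    (contDiffAt_higherPart hGc' N 0).of_le (by simp)
  have hP : ContDiffAt ℝ 1 (fun p : ℝ × E => e p.2 + p.1 • higherPart Gc N p) (0, e.symm y) :=
    (((hGe ▸ hGc' 0 : ContDiffAt ℝ ∞ e (e.symm y)).of_le (by simp)).comp (0, e.symm y)
      contDiffAt_snd).add (contDiffAt_fst.smul hH)
  have hFy : Tendsto (fun p : ℝ × F => Fh p.1 p.2) (l ×ˢ 𝓝 y) (𝓝 (e.symm y)) := by
    simpa only [inverseCoeff_zero] using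
      hF.tendsto hl (by simpa only [inverseCoeff_zero] using he₁.continuousAt)
  have hΦ : Tendsto (approxInverse e (higherPart Gc N) N) (l ×ˢ 𝓝 y) (𝓝 (e.symm y)) :=
    (tendsto_approxInverse he₁ hH N).mono_left hlprod
  have truncate_G := (hG.sub_higherPart_isBigO hGe N).comp_tendsto (tendsto_fst.prodMk hFy)
  have truncate_F := (isBigO_comp_prodMk_sub_of_contDiffAt hP (tendsto_fst.mono_right hl) hFy
    hΦ).trans (hF.sub_approxInverse_isBigO hl hy he hGc N)
  have residual := (approxInverse_residual_isBigO hy he₁ hH N).mono hlprod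
  refine ((truncate_G.add truncate_F).add residual).congr_left fun p => ?_
  simp only [Function.comp_apply]
  abel

theorem inverse_comp_sub_isBigO [CompleteSpace E] (hG : HasAsymptoticExpansionAt l Gh Gc x)
    (hF : HasAsymptoticExpansionAt l Fh (inverseCoeff e Gc) (e x)) (hl : l ≤ 𝓝 0)
    (hx : x ∈ e.source) (he : ∀ z ∈ e.target, ContDiffAt ℝ ∞ e.symm z)
    (hGc : ∀ j, ∀ x ∈ e.source, ContDiffAt ℝ ∞ (Gc j) x) (hGe : Gc 0 = e) (N : ℕ) :
    (fun p : ℝ × E => Fh p.1 (Gh p.1 p.2) - p.2) =O[l ×ˢ 𝓝 x] fun p => p.1 ^ (N + 1) := by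
  have hy : e x ∈ e.target := e.map_source hx
  have hH : ContDiffAt ℝ 1 (higherPart Gc N) (0, e.symm (e x)) :=
    (contDiffAt_higherPart (fun j => hGc j _ (e.map_target hy)) N 0).of_le (by simp)
  have hGx : Tendsto (fun p : ℝ × E => Gh p.1 p.2) (l ×ˢ 𝓝 x) (𝓝 (e x)) := by
    simpa only [hGe] using hG.tendsto hl (hGc 0 x hx).continuousAt
  have hsnd : Tendsto Prod.snd (l ×ˢ 𝓝 x) (𝓝 (e.symm (e x))) := by
    simpa only [e.left_inv hx] using tendsto_snd
  have truncate_F := (hF.sub_approxInverse_isBigO hl hy he hGc N).comp_tendsto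
    (tendsto_fst.prodMk hGx)
  have truncate_G := isBigO_sub_approxInverse hy ((he _ hy).of_le (by simp)) hH
    (tendsto_fst.mono_right hl) hsnd hGx
    ((hG.sub_higherPart_isBigO hGe N).neg_left.congr_left fun p => neg_sub _ _)
  refine (truncate_F.sub truncate_G).congr_left fun p => ?_
  simp only [Function.comp_apply, sub_sub_sub_cancel_right]

end HasAsymptoticExpansionAt

end AsymptoticExpansionAt

section Uniformity

variable {E : Type*} [NormedAddCommGroup E] {I : Set ℝ}

theorem eventually_forall_mem_of_isCompact {α X : Type*} [TopologicalSpace X] {l : Filter α}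
    {K : Set X} (hK : IsCompact K) {P : α × X → Prop} (hP : ∀ x ∈ K, ∀ᶠ p in l ×ˢ 𝓝 x, P p) :
    ∀ᶠ a in l, ∀ x ∈ K, P (a, x) := by
  obtain ⟨s, hs, t, ht, hst⟩ := mem_prod_iff.1 (hK.mem_prod_nhdsSet_of_forall hP)
  filter_upwards [hs] with a ha x hx
  exact hst ⟨ha, subset_of_mem_nhdsSet ht hx⟩

theorem exists_pos_forall_le_of_eventually (hI : I ⊆ Ioi 0) {P : ℝ → Prop}
    (hP : ∀ᶠ h in 𝓝[I] 0, P h) : ∃ h₀ > 0, ∀ h ∈ I, h ≤ h₀ → P h := by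
  obtain ⟨ε, hε, hεP⟩ := Metric.mem_nhdsWithin_iff.1 hP
  refine ⟨ε / 2, half_pos hε, fun h hh hle => hεP ⟨?_, hh⟩⟩
  rw [Metric.mem_ball, dist_zero_right, Real.norm_of_nonneg (hI hh).le]
  exact hle.trans_lt (half_lt_self hε)

theorem eventually_norm_le_pow_of_isBigO {X : Type*} {l : Filter X} (hI : I ⊆ Ioi 0)
    {f : ℝ × X → E} {N : ℕ} (hf : f =O[𝓝[I] 0 ×ˢ l] fun p => p.1 ^ (N + 1)) :
    ∀ᶠ p in 𝓝[I] 0 ×ˢ l, ‖f p‖ ≤ p.1 ^ N := by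
  have hfst : Tendsto (Prod.fst : ℝ × X → ℝ) (𝓝[I] 0 ×ˢ l) (𝓝[I] 0) := tendsto_fst
  have hpow : (fun p : ℝ × X => p.1 ^ (N + 1)) =o[𝓝[I] 0 ×ˢ l] fun p => p.1 ^ N :=
    (isLittleO_pow_pow (Nat.lt_succ_self N)).comp_tendsto (hfst.mono_right nhdsWithin_le_nhds)
  filter_upwards [(hf.trans_isLittleO hpow).bound one_pos, hfst self_mem_nhdsWithin] with p hp hpI
  rwa [one_mul, Real.norm_of_nonneg (pow_nonneg (hI hpI).le N)] at hp

theorem exists_forall_norm_le_mul_pow {X : Type*} {K : Set X} {f : ℝ → X → E} (hI : I ⊆ Ioi 0)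
    (hf : ∀ N : ℕ, ∀ᶠ h in 𝓝[I] 0, ∀ x ∈ K, ‖f h x‖ ≤ h ^ N) :
    ∃ h₀ > 0, ∀ N : ℕ, ∃ C > 0, ∀ h ∈ I, h ≤ h₀ → ∀ x ∈ K, ‖f h x‖ ≤ C * h ^ N := by
  choose δ hδ hf using fun N => exists_pos_forall_le_of_eventually hI (hf N)
  refine ⟨δ 0, hδ 0, fun N => ⟨max 1 (1 / δ N ^ N), lt_max_of_lt_left one_pos,
    fun h hh hle x hx => ?_⟩⟩
  have hh_pos : 0 < h := hI hh
  rcases le_total h (δ N) with hhδ | hδh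
  · exact (hf N h hh hhδ x hx).trans
      (le_mul_of_one_le_left (pow_nonneg hh_pos.le N) (le_max_left _ _))
  · have hδN := hδ N
    calc ‖f h x‖ ≤ h ^ 0 := hf 0 h hh hle x hx
      _ = 1 / δ N ^ N * δ N ^ N := by field_simp
      _ ≤ max 1 (1 / δ N ^ N) * h ^ N := by
        gcongr
        exact le_max_right _ _

/-- `Fh h ∘ Gh h = id + O(h ^ ∞)` uniformly on the compact subsets of `U`, where for small `h ∈ I`
the map `Gh h` sends such a compact set into `V`, the set on which `Fh` is considered. -/
def AsymptoticLeftInvOn {X : Type*} (I : Set ℝ) (Fh : ℝ → X → E) (Gh : ℝ → E → X) (U : Set E)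
    (V : Set X) : Prop :=
  ∀ K ⊆ U, IsCompact K → ∃ h₀ > 0, (∀ h ∈ I, h ≤ h₀ → ∀ x ∈ K, Gh h x ∈ V) ∧
    ∀ N : ℕ, ∃ C > 0, ∀ h ∈ I, h ≤ h₀ → ∀ x ∈ K, ‖Fh h (Gh h x) - x‖ ≤ C * h ^ N

theorem asymptoticLeftInvOn_of_isBigO {X : Type*} (hI : I ⊆ Ioi 0) {Fh : ℝ → X → E}
    {Gh : ℝ → E → X} {U : Set E} {V : Set X}
    (hV : ∀ x ∈ U, ∀ᶠ p : ℝ × E in 𝓝[I] 0 ×ˢ 𝓝 x, Gh p.1 p.2 ∈ V)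
    (hFG : ∀ x ∈ U, ∀ N : ℕ, (fun p : ℝ × E => Fh p.1 (Gh p.1 p.2) - p.2)
      =O[𝓝[I] 0 ×ˢ 𝓝 x] fun p => p.1 ^ (N + 1)) :
    AsymptoticLeftInvOn I Fh Gh U V := by
  intro K hKU hK
  obtain ⟨δ₁, hδ₁, hmem⟩ := exists_pos_forall_le_of_eventually hI
    (eventually_forall_mem_of_isCompact hK fun x hx => hV x (hKU hx))
  obtain ⟨δ₂, hδ₂, hbound⟩ := exists_forall_norm_le_mul_pow hI fun N =>
    eventually_forall_mem_of_isCompact hK fun x hx =>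
      eventually_norm_le_pow_of_isBigO hI (hFG x (hKU hx) N)
  refine ⟨min δ₁ δ₂, lt_min hδ₁ hδ₂, fun h hh hle => hmem h hh (hle.trans (min_le_left _ _)),
    fun N => ?_⟩
  obtain ⟨C, hC, hCN⟩ := hbound N
  exact ⟨C, hC, fun h hh hle => hCN h hh (hle.trans (min_le_right _ _))⟩

end Uniformity

theorem IsDiffeoOntoNbhd.exists_openPartialHomeomorph {n : ℕ} {G0 : Eucl n → Eucl n}
    {U B : Set (Eucl n)} (hG0 : IsDiffeoOntoNbhd G0 U B) (hU : IsOpen U) :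
    ∃ e : OpenPartialHomeomorph (Eucl n) (Eucl n), e.source = U ∧ e.target = G0 '' U ∧
      ⇑e = G0 ∧ ContDiffOn ℝ ∞ e.symm e.target := by
  obtain ⟨F0, hF0, hleft⟩ := hG0.smooth_inv
  have hleft : LeftInvOn F0 G0 U := hleft
  exact ⟨{  toFun := G0
            invFun := F0
            source := U
            target := G0 '' U
            map_source' := mapsTo_image G0 U
            map_target' := forall_mem_image.2 fun x hx => (hleft hx).symm ▸ hx
            left_inv' := hleft
            right_inv' := hleft.rightInvOn_image
            open_source := hU
            open_target := hG0.isOpen_image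
            continuousOn_toFun := hG0.contDiffOn.continuousOn
            continuousOn_invFun := hF0.continuousOn }, rfl, rfl, rfl, hF0⟩

theorem formal_inverse_of_asymptotic_chart_general {n : ℕ} {I : Set ℝ} (hI : I ⊆ Ioi 0)
    {e : OpenPartialHomeomorph (Eucl n) (Eucl n)} (he : ContDiffOn ℝ ∞ e.symm e.target)
    {Gh : ℝ → Eucl n → Eucl n} {Gc : ℕ → Eucl n → Eucl n}
    (hG : HasCinftyExpansion I e.source Gh Gc) (hGe : Gc 0 = e) :
    ∃ (Fh : ℝ → Eucl n → Eucl n) (Fc : ℕ → Eucl n → Eucl n),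
      HasCinftyExpansion I e.target Fh Fc ∧ Fc 0 = e.symm ∧
      AsymptoticLeftInvOn I Fh Gh e.source e.target ∧
      AsymptoticLeftInvOn I Gh Fh e.target e.source := by
  have he' : ∀ y ∈ e.target, ContDiffAt ℝ ∞ e.symm y := fun y hy =>
    he.contDiffAt (e.open_target.mem_nhds hy)
  have hGc : ∀ j, ∀ x ∈ e.source, ContDiffAt ℝ ∞ (Gc j) x := fun j x hx =>
    (hG.2.1 j).contDiffAt (e.open_source.mem_nhds hx)
  obtain ⟨Fh, hF⟩ := exists_hasCinftyExpansion hI e.open_target (Fc := inverseCoeff e Gc)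
    fun j y hy => (contDiffAt_inverseCoeff (he' y hy)
      (fun j => hGc j _ (e.map_target hy)) j).contDiffWithinAt
  have hl : 𝓝[I] (0 : ℝ) ≤ 𝓝 0 := nhdsWithin_le_nhds
  have hGx : ∀ x ∈ e.source, HasAsymptoticExpansionAt (𝓝[I] 0) Gh Gc x := fun x hx =>
    hG.hasAsymptoticExpansionAt (e.open_source.mem_nhds hx)
  have hFy : ∀ y ∈ e.target, HasAsymptoticExpansionAt (𝓝[I] 0) Fh (inverseCoeff e Gc) y :=
    fun y hy => hF.hasAsymptoticExpansionAt (e.open_target.mem_nhds hy)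
  refine ⟨Fh, inverseCoeff e Gc, hF, inverseCoeff_zero e Gc,
    asymptoticLeftInvOn_of_isBigO hI (fun x hx => ?_) fun x hx =>
      (hGx x hx).inverse_comp_sub_isBigO (hFy _ (e.map_source hx)) hl hx he' hGc hGe,
    asymptoticLeftInvOn_of_isBigO hI (fun y hy => ?_) fun y hy =>
      (hGx _ (e.map_target hy)).comp_inverse_sub_isBigO (hFy y hy) hl hy he' hGc hGe⟩
  · refine ((hGx x hx).tendsto hl (hGc 0 x hx).continuousAt).eventually
      (e.open_target.mem_nhds ?_)
    exact hGe ▸ e.map_source hx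
  · refine ((hFy y hy).tendsto hl ?_).eventually (e.open_source.mem_nhds ?_)
    · exact inverseCoeff_zero e Gc ▸ (he' y hy).continuousAt
    · exact inverseCoeff_zero e Gc ▸ e.map_target hy

/-- (Formal invertibility of asymptotic charts.) There are an open neighborhood `V` of
`closure B` and a family of smooth maps `Fh ℏ : V → ℝⁿ` with asymptotic expansion
`F₀ + ℏF₁ + ⋯` in the `C^∞(V)` topology, `F₀ = G₀⁻¹` on `V`, such that
`Fh ∘ Gh = Id + O(ℏ^∞)` uniformly on compact subsets of `G₀⁻¹(V)` and
`Gh ∘ Fh = Id + O(ℏ^∞)` uniformly on compact subsets of `V ∩ G₀(U)`. -/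
theorem formal_inverse_of_asymptotic_chart
    (n : ℕ) (hn : 1 ≤ n) (I : Set ℝ) (hI : I ⊆ Ioi 0) (hI0 : (0 : ℝ) ∈ closure I)
    (U B : Set (Eucl n)) (hU : IsOpen U) (hUb : Bornology.IsBounded U)
    (hB : IsOpen B) (hBb : Bornology.IsBounded B)
    (Gh : ℝ → Eucl n → Eucl n) (Gc : ℕ → Eucl n → Eucl n)
    (hexp : HasCinftyExpansion I U Gh Gc)
    (hdiff : IsDiffeoOntoNbhd (Gc 0) U B) :
    ∃ V : Set (Eucl n), IsOpen V ∧ closure B ⊆ V ∧ V ⊆ Gc 0 '' U ∧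
    ∃ (Fh : ℝ → Eucl n → Eucl n) (Fc : ℕ → Eucl n → Eucl n),
      HasCinftyExpansion I V Fh Fc ∧
      (∀ y ∈ V, Fc 0 y ∈ U ∧ Gc 0 (Fc 0 y) = y) ∧
      (∀ K : Set (Eucl n), K ⊆ U ∩ (Gc 0) ⁻¹' V → IsCompact K →
        ∃ h₀ > 0, (∀ h ∈ I, h ≤ h₀ → ∀ x ∈ K, Gh h x ∈ V) ∧
          ∀ N : ℕ, ∃ C > 0, ∀ h ∈ I, h ≤ h₀ → ∀ x ∈ K,
            ‖Fh h (Gh h x) - x‖ ≤ C * h ^ N) ∧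
      (∀ K' : Set (Eucl n), K' ⊆ V ∩ Gc 0 '' U → IsCompact K' →
        ∃ h₀' > 0, (∀ h ∈ I, h ≤ h₀' → ∀ y ∈ K', Fh h y ∈ U) ∧
          ∀ N : ℕ, ∃ C > 0, ∀ h ∈ I, h ≤ h₀' → ∀ y ∈ K',
            ‖Gh h (Fh h y) - y‖ ≤ C * h ^ N) := by
  obtain ⟨e, he_source, he_target, he_coe, he_symm⟩ := hdiff.exists_openPartialHomeomorph hU
  rw [← he_source] at hexp
  obtain ⟨Fh, Fc, hF, hFc, hFG, hGF⟩ :=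
    formal_inverse_of_asymptotic_chart_general hI he_symm hexp he_coe.symm
  rw [← he_target, ← he_source, ← he_coe]
  exact ⟨e.target, e.open_target, he_target ▸ hdiff.closure_subset_image, Subset.rfl, Fh, Fc, hF,
    fun y hy => hFc ▸ ⟨e.map_target hy, e.right_inv hy⟩,
    fun K hK => hFG K (hK.trans inter_subset_left),
    fun K' hK' => hGF K' (hK'.trans inter_subset_left)⟩
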